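/- arXiv:2003.08687 — 4 statements merged into one kernel-verified Lean document; each statement's English description precedes it below -/
import Mathlib

section
/- Let f_1, ..., f_m : ℝ^d → ℝ^d be contracting similarity maps, all with ratio r ∈ (0,1), and let A be a nonempty compact set with A = ⋃_{k=1}^m f_k(A). Suppose x̃ ∈ ℝ^d satisfies x̃ = (1/m) ∑_{k=1}^m f_k(x̃), and set δ = max_{k=1,...,m} ‖f_k(x̃) − x̃‖. If h : ℝ^d → ℝ^d is an isometry with ‖h(x̃) − x̃‖ > 2δ/(1−r), then h(A) and A are disjoint. -/
/-! The attractor lies in the closed ball of radius `δ / (1 - r)` around `x₀`: if `a ∈ A` is at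
maximal distance `D` from `x₀` and `a = f k b` with `b ∈ A`, then `D ≤ r * D + δ`. A common point
`h a = b` of `h '' A` and `A` would then give
`‖h x₀ - x₀‖ ≤ dist x₀ a + dist b x₀ ≤ 2 * δ / (1 - r)`. -/

/-- If an isometry `h` moves the center of gravity `x₀` by more than `2δ/(1-r)`,
then `h(A)` and `A` are disjoint. -/
theorem stmt_2 {d : ℕ} {m : ℕ} (hm : 0 < m)
    (f : Fin m → EuclideanSpace ℝ (Fin d) → EuclideanSpace ℝ (Fin d))
    (r : ℝ) (hr0 : 0 < r) (hr1 : r < 1)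
    (hsim : ∀ k, ∀ x y, dist (f k x) (f k y) = r * dist x y)
    (A : Set (EuclideanSpace ℝ (Fin d))) (hA : A.Nonempty) (hAc : IsCompact A)
    (hself : A = ⋃ k, f k '' A)
    (x₀ : EuclideanSpace ℝ (Fin d)) (hx : x₀ = (m : ℝ)⁻¹ • ∑ k, f k x₀)
    (δ : ℝ) (hδ : δ = ⨆ k, ‖f k x₀ - x₀‖)
    (h : EuclideanSpace ℝ (Fin d) → EuclideanSpace ℝ (Fin d)) (hiso : Isometry h)
    (hfar : ‖h x₀ - x₀‖ > 2 * δ / (1 - r)) :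
    Disjoint (h '' A) A := by
  have hle : ∀ k, dist (f k x₀) x₀ ≤ δ := by
    intro k
    rw [hδ, dist_eq_norm]
    exact le_ciSup (f := fun k => ‖f k x₀ - x₀‖) (Set.finite_range _).bddAbove k
  have hball : ∀ a ∈ A, dist a x₀ ≤ δ / (1 - r) := by
    obtain ⟨a, haA, hmax⟩ := hAc.exists_isMaxOn hA
      (f := fun y => dist y x₀) (by fun_prop)
    have hmax' : ∀ y ∈ A, dist y x₀ ≤ dist a x₀ := fun y hy => hmax hy
    have haU := haA
    rw [hself] at haU
    obtain ⟨k, b, hb, hba⟩ := Set.mem_iUnion.mp haU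
    have hD : dist a x₀ ≤ δ / (1 - r) := by
      rw [le_div_iff₀ (by linarith)]
      have h1 := dist_triangle (f k b) (f k x₀) x₀
      rw [hsim, hba] at h1
      have h2 := mul_le_mul_of_nonneg_left (hmax' b hb) hr0.le
      linarith [hle k]
    exact fun y hy => (hmax' y hy).trans hD
  rw [Set.disjoint_left]
  rintro _ ⟨a, ha, rfl⟩ hhA
  have h1 := dist_triangle (h x₀) (h a) x₀
  rw [hiso.dist_eq, dist_comm x₀ a, dist_eq_norm (h x₀) x₀] at h1
  have h2 := hball a ha
  have h3 := hball (h a) hhA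
  rw [mul_div_assoc] at hfar
  linarith
end

section
/- (Hata's connectedness criterion.) Let f_1, ..., f_m : ℝ^d → ℝ^d be contracting similarity maps, all with ratio r ∈ (0,1), and let A be a nonempty compact set with A = ⋃_{k=1}^m f_k(A). Define the connectedness graph G_c as the simple graph on the vertex set {1,...,m} in which distinct vertices k and j are adjacent if and only if f_k(A) ∩ f_j(A) ≠ ∅. Then A is a connected topological space if and only if the graph G_c is connected. -/
/-!
If `A` is connected and `G` is not, the pieces reachable from a fixed vertex and the remaining pieces
give two disjoint nonempty closed sets covering `A`, which is impossible.

Conversely, call a set `ε`-chainable if any two of its points are joined by a finite chain inside the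
set with steps of length at most `ε`. The set `A` is `diam A`-chainable. If `A` is `ε`-chainable, the
maps `f k` carry chains to `r * ε`-chains, so each piece is `r * ε`-chainable, and when `G` is connected
the chains of neighbouring pieces can be concatenated at a common point
(`ChainStep.joined_of_reachable`). Iterating, `A` is `r ^ n * diam A`-chainable for every `n`. Finally a
compact set that is `ε`-chainable for arbitrarily small `ε` is connected
(`isPreconnected_of_chainable`), as disjoint compact sets are a positive distance apart.
-/

/-- A step from `x` to `y` of length at most `ε` that ends in `A`. Chains are paths for the reflexive
transitive closure of this relation, so a chain starting in `A` stays in `A`. -/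
def ChainStep {X : Type*} [PseudoMetricSpace X] (A : Set X) (ε : ℝ) (x y : X) : Prop :=
  y ∈ A ∧ dist x y ≤ ε

/-- Any two points of `A` are joined by a chain in `A` with steps of length at most `ε`. -/
def Chainable {X : Type*} [PseudoMetricSpace X] (A : Set X) (ε : ℝ) : Prop :=
  ∀ x ∈ A, ∀ y ∈ A, Relation.ReflTransGen (ChainStep A ε) x y

theorem isPreconnected_of_chainable {X : Type*} [MetricSpace X] {A : Set X}
    (hAc : IsCompact A) (h : ∀ δ > 0, ∃ ε < δ, Chainable A ε) : IsPreconnected A := by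
  rw [isPreconnected_closed_iff]
  rintro u v hu hv huv ⟨x, hxA, hxu⟩ ⟨y, hyA, hyv⟩
  by_contra hne
  have hdisj : Disjoint (A ∩ u) (A ∩ v) := by
    rw [Set.disjoint_left]
    rintro z ⟨hzA, hzu⟩ ⟨_, hzv⟩
    exact hne ⟨z, hzA, hzu, hzv⟩
  obtain ⟨δ, hδ, hδd⟩ := Metric.exists_pos_forall_lt_edist (hAc.inter_right hu)
    (hAc.inter_right hv).isClosed hdisj
  obtain ⟨ε, hε, hch⟩ := h δ hδ
  -- A chain with steps shorter than the gap `δ` cannot leave `A ∩ u`.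
  have key : ∀ z, Relation.ReflTransGen (ChainStep A ε) x z → z ∈ A ∩ u := by
    intro z hz
    induction hz with
    | refl => exact ⟨hxA, hxu⟩
    | tail _ hstep ih =>
      rename_i b c _
      refine ⟨hstep.1, (huv hstep.1).resolve_right fun hcv => ?_⟩
      have hlt := hδd b ih c ⟨hstep.1, hcv⟩
      rw [edist_nndist, ENNReal.coe_lt_coe, ← NNReal.coe_lt_coe, coe_nndist] at hlt
      linarith [hstep.2]
  exact hne ⟨y, hyA, (key y (hch x hxA y hyA)).2, hyv⟩

section SelfSimilar

variable {X ι : Type*} [MetricSpace X] {f : ι → X → X} {r : ℝ} {A : Set X} {G : SimpleGraph ι}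

theorem ChainStep.joined_of_reachable (hr0 : 0 < r)
    (hsim : ∀ k, ∀ x y, dist (f k x) (f k y) = r * dist x y)
    (hself : A = ⋃ k, f k '' A)
    (hG : ∀ k j, G.Adj k j ↔ k ≠ j ∧ ((f k '' A) ∩ (f j '' A)).Nonempty)
    {ε : ℝ} (hch : Chainable A ε) {k j : ι} (hkj : G.Reachable k j) :
    ∀ x ∈ f k '' A, ∀ y ∈ f j '' A, Relation.ReflTransGen (ChainStep A (r * ε)) x y := by
  have hpiece : ∀ k, ∀ x ∈ f k '' A, ∀ y ∈ f k '' A,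
      Relation.ReflTransGen (ChainStep A (r * ε)) x y := by
    rintro k _ ⟨a, ha, rfl⟩ _ ⟨b, hb, rfl⟩
    refine (hch a ha b hb).lift (f k) fun p q hpq => ⟨?_, ?_⟩
    · rw [hself]
      exact Set.mem_iUnion.2 ⟨k, q, hpq.1, rfl⟩
    · rw [hsim]
      exact mul_le_mul_of_nonneg_left hpq.2 hr0.le
  obtain ⟨w⟩ := hkj
  induction w with
  | nil => exact hpiece _
  | cons hadj _ ih =>
    intro x hx y hy
    obtain ⟨_, z, hz₁, hz₂⟩ := (hG _ _).1 hadj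
    exact (hpiece _ x hx z hz₁).trans (ih z hz₂ y hy)

theorem Chainable.pow_mul_diam (hr0 : 0 < r)
    (hsim : ∀ k, ∀ x y, dist (f k x) (f k y) = r * dist x y)
    (hAc : IsCompact A) (hself : A = ⋃ k, f k '' A)
    (hG : ∀ k j, G.Adj k j ↔ k ≠ j ∧ ((f k '' A) ∩ (f j '' A)).Nonempty)
    (hconn : G.Preconnected) (n : ℕ) : Chainable A (r ^ n * Metric.diam A) := by
  induction n with
  | zero =>
    intro x hx y hy
    refine .single ⟨hy, ?_⟩
    simpa using Metric.dist_le_diam_of_mem hAc.isBounded hx hy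
  | succ n ih =>
    intro x hx y hy
    rw [hself] at hx hy
    obtain ⟨k, hk⟩ := Set.mem_iUnion.1 hx
    obtain ⟨j, hj⟩ := Set.mem_iUnion.1 hy
    rw [pow_succ', mul_assoc]
    exact ChainStep.joined_of_reachable hr0 hsim hself hG ih (hconn k j) x hk y hj

theorem preconnected_of_isPreconnected [Finite ι] (hf : ∀ k, Continuous (f k))
    (hA : A.Nonempty) (hAc : IsCompact A) (hself : A = ⋃ k, f k '' A)
    (hG : ∀ k j, G.Adj k j ↔ k ≠ j ∧ ((f k '' A) ∩ (f j '' A)).Nonempty)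
    (hconn : IsPreconnected A) : G.Preconnected := by
  intro k j
  by_contra hkj
  have hclosed : ∀ S : Set ι, IsClosed (⋃ i ∈ S, f i '' A) := fun S =>
    S.toFinite.isClosed_biUnion fun i _ => (hAc.image (hf i)).isClosed
  have hmeet : ∀ S : Set ι, ∀ i ∈ S, (A ∩ ⋃ i ∈ S, f i '' A).Nonempty := by
    intro S i hi
    obtain ⟨a, ha⟩ := hA
    refine ⟨f i a, ?_, Set.mem_biUnion hi ⟨a, ha, rfl⟩⟩
    rw [hself]
    exact Set.mem_iUnion.2 ⟨i, a, ha, rfl⟩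
  let S : Set ι := {i | G.Reachable k i}
  obtain ⟨z, -, hz₁, hz₂⟩ := isPreconnected_closed_iff.1 hconn _ _ (hclosed S) (hclosed Sᶜ)
    (by
      intro x hx
      rw [hself] at hx
      obtain ⟨i, hi⟩ := Set.mem_iUnion.1 hx
      by_cases hiS : i ∈ S
      · exact Or.inl (Set.mem_biUnion hiS hi)
      · exact Or.inr (Set.mem_biUnion (s := Sᶜ) hiS hi))
    (hmeet S k (SimpleGraph.Reachable.refl k)) (hmeet Sᶜ j hkj)
  simp only [Set.mem_iUnion] at hz₁ hz₂
  obtain ⟨a, haS, hza⟩ := hz₁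
  obtain ⟨b, hbS, hzb⟩ := hz₂
  have hab : a ≠ b := fun h => hbS (h ▸ haS)
  exact hbS (SimpleGraph.Reachable.trans haS ((hG a b).2 ⟨hab, z, hza, hzb⟩).reachable)

end SelfSimilar

/-- Hata's connectedness criterion: the attractor `A` is connected iff the
connectedness graph `G_c` (vertices `1,…,m`, edges between `k ≠ j` with
`f k '' A ∩ f j '' A ≠ ∅`) is connected. -/
theorem stmt_3 {d : ℕ} {m : ℕ}
    (f : Fin m → EuclideanSpace ℝ (Fin d) → EuclideanSpace ℝ (Fin d))
    (r : ℝ) (hr0 : 0 < r) (hr1 : r < 1)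
    (hsim : ∀ k, ∀ x y, dist (f k x) (f k y) = r * dist x y)
    (A : Set (EuclideanSpace ℝ (Fin d))) (hA : A.Nonempty) (hAc : IsCompact A)
    (hself : A = ⋃ k, f k '' A)
    (G : SimpleGraph (Fin m))
    (hG : ∀ k j : Fin m, G.Adj k j ↔ k ≠ j ∧ ((f k '' A) ∩ (f j '' A)).Nonempty) :
    IsConnected A ↔ G.Connected := by
  constructor
  · intro h
    have hf : ∀ k, Continuous (f k) := fun k =>
      (LipschitzWith.of_dist_le_mul (K := ⟨r, hr0.le⟩) fun x y => (hsim k x y).le).continuous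
    have hne : Nonempty (Fin m) := by
      obtain ⟨x, hx⟩ := hA
      rw [hself] at hx
      exact ⟨(Set.mem_iUnion.1 hx).choose⟩
    exact ⟨preconnected_of_isPreconnected hf hA hAc hself hG h.isPreconnected⟩
  · intro h
    refine ⟨hA, isPreconnected_of_chainable hAc fun δ hδ => ?_⟩
    have hlim : Filter.Tendsto (fun n : ℕ => r ^ n * Metric.diam A) Filter.atTop (nhds 0) := by
      simpa using (tendsto_pow_atTop_nhds_zero_of_lt_one hr0.le hr1).mul_const (Metric.diam A)
    obtain ⟨n, hn⟩ := (hlim.eventually_lt_const hδ).exists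
    exact ⟨_, hn, Chainable.pow_mul_diam hr0 hsim hAc hself hG h.preconnected n⟩
end

section
/- Let S be a 2×2 real matrix with SᵀS = I and det S = 1 (a plane rotation matrix), and assume S ≠ I and S ≠ −I. Let G be a 2×2 real matrix of the form G = k·R, where k > 0 is real and R is a 2×2 real matrix with RᵀR = I and det R = 1 (so G is the matrix of a similarity map with positive determinant). Suppose there exists an invertible 2×2 real matrix P such that both P^{-1}·S·P and P^{-1}·G·P have all entries rational. Then there exist rational numbers b, c such that G = b·S + c·I. -/
open Matrix

/-!
Matrices of the form `!![x, -y; y, x]` are a plane spanned over `ℝ` by `1` and `S`, since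
`S ≠ ±1` forces the off-diagonal entry of `S` to be nonzero. Hence `G = b • S + c • 1` with real
`b`, `c`, and this relation survives conjugation by `P`. The conjugate `P⁻¹ * S * P` has no real
eigenvalue, so its lower-left entry is nonzero; comparing lower-left and upper-left entries of
the two rational conjugates expresses `b` and `c` as rational functions of rational numbers.
-/

/-- A plane rotation matrix has the shape `!![x, -y; y, x]`. -/
lemma rotation_entries {R : Matrix (Fin 2) (Fin 2) ℝ} (horth : Rᵀ * R = 1) (hdet : R.det = 1) :
    R 1 1 = R 0 0 ∧ R 0 1 = -R 1 0 := by
  -- For determinant one the inverse is both the transpose and the adjugate.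
  have h : R.adjugate = Rᵀ := by
    calc R.adjugate = (Rᵀ * R) * R.adjugate := by rw [horth, one_mul]
      _ = Rᵀ := by rw [mul_assoc, mul_adjugate, hdet, one_smul, mul_one]
  have h00 := congrFun (congrFun h 0) 0
  have h01 := congrFun (congrFun h 0) 1
  simp [adjugate_fin_two] at h00 h01
  exact ⟨h00, by linarith⟩

/-- If a rotation `S ≠ ±I` and a positive-determinant similarity matrix `G = k·R`
are both rational with respect to the same basis, then `G = b·S + c·I` for some
rational `b, c`. -/
theorem stmt_14 (S : Matrix (Fin 2) (Fin 2) ℝ)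
    (hSorth : Sᵀ * S = 1) (hSdet : S.det = 1) (hS1 : S ≠ 1) (hSneg1 : S ≠ -1)
    (G R : Matrix (Fin 2) (Fin 2) ℝ) (k : ℝ) (hk : 0 < k)
    (hRorth : Rᵀ * R = 1) (hRdet : R.det = 1) (hG : G = k • R)
    (P : Matrix (Fin 2) (Fin 2) ℝ) (hP : IsUnit P.det)
    (hSrat : ∀ i j, ∃ q : ℚ, (P⁻¹ * S * P) i j = (q : ℝ))
    (hGrat : ∀ i j, ∃ q : ℚ, (P⁻¹ * G * P) i j = (q : ℝ)) :
    ∃ b c : ℚ, G = (b : ℝ) • S + (c : ℝ) • (1 : Matrix (Fin 2) (Fin 2) ℝ) := by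
  obtain ⟨s11, s01⟩ := rotation_entries hSorth hSdet
  obtain ⟨r11, r01⟩ := rotation_entries hRorth hRdet
  have hsq : S 0 0 ^ 2 + S 1 0 ^ 2 = 1 := by
    rw [det_fin_two, s11, s01] at hSdet
    linarith
  have hy : S 1 0 ≠ 0 := by
    intro h0
    have hx : S 0 0 = 1 ∨ S 0 0 = -1 := by
      simpa [h0] using hsq
    rcases hx with hx | hx
    · apply hS1
      ext i j
      fin_cases i <;> fin_cases j <;> simp [s11, s01, h0, hx]
    · apply hSneg1
      ext i j
      fin_cases i <;> fin_cases j <;> simp [s11, s01, h0, hx]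
  obtain ⟨b, c, hbc⟩ : ∃ b c : ℝ, G = b • S + c • (1 : Matrix (Fin 2) (Fin 2) ℝ) := by
    refine ⟨k * R 1 0 / S 1 0, k * R 0 0 - k * R 1 0 / S 1 0 * S 0 0, ?_⟩
    ext i j
    fin_cases i <;> fin_cases j <;> simp [hG, s11, s01, r11, r01, hy]
  have hconj : P⁻¹ * G * P = b • (P⁻¹ * S * P) + c • (1 : Matrix (Fin 2) (Fin 2) ℝ) := by
    rw [hbc]
    simp [mul_add, add_mul, nonsing_inv_mul P hP]
  have htr : (P⁻¹ * S * P).trace = S.trace := by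
    rw [mul_assoc, trace_mul_comm, mul_assoc, mul_nonsing_inv P hP, mul_one]
  have hdet : (P⁻¹ * S * P).det = 1 := by
    rw [mul_assoc, det_mul_comm, mul_assoc, mul_nonsing_inv P hP, mul_one, hSdet]
  generalize P⁻¹ * S * P = T at *
  generalize P⁻¹ * G * P = H at *
  -- A triangular `T` would have `(T 0 0 - T 1 1)²` equal to the discriminant `-4 (S 1 0)² < 0`.
  have hT : T 1 0 ≠ 0 := by
    intro h0
    rw [trace_fin_two, trace_fin_two, s11] at htr
    rw [det_fin_two, h0] at hdet
    have hpos : 0 < S 1 0 ^ 2 := by positivity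
    have hd : (T 0 0 - T 1 1) ^ 2 = -4 * S 1 0 ^ 2 := by
      linear_combination (T 0 0 + T 1 1 + 2 * S 0 0) * htr - 4 * hdet + 4 * hsq
    nlinarith [sq_nonneg (T 0 0 - T 1 1)]
  obtain ⟨t10, ht10⟩ := hSrat 1 0
  obtain ⟨t00, ht00⟩ := hSrat 0 0
  obtain ⟨g10, hg10⟩ := hGrat 1 0
  obtain ⟨g00, hg00⟩ := hGrat 0 0
  have e10 := congrFun (congrFun hconj 1) 0
  have e00 := congrFun (congrFun hconj 0) 0
  simp [ht10, ht00, hg10, hg00] at e10 e00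
  rw [ht10] at hT
  have hb : b = ((g10 / t10 : ℚ) : ℝ) := by
    push_cast
    rw [e10, mul_div_cancel_right₀ _ hT]
  have hc : c = ((g00 - g10 / t10 * t00 : ℚ) : ℝ) := by
    rw [Rat.cast_sub, Rat.cast_mul, ← hb]
    linarith
  exact ⟨_, _, by rw [hbc, hb, hc]⟩
end

section
/- Let d be a positive squarefree integer. (1) For all integers m, n one has (n² − d·m²)² + d·(2mn)² = (n² + d·m²)². (2) Conversely, if u, v, w are positive integers with u² + d·v² = w², then there exist positive integers m, n with n² > d·m² such that u·(n² + d·m²) = w·(n² − d·m²) and v·(n² + d·m²) = w·(2mn); that is, (u/w, v/w) = ((n² − dm²)/(n² + dm²), 2mn/(n² + dm²)). -/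
/-- Euclid's formula for generalized Pythagorean triples `u² + d·v² = w²`:
the formula always yields such triples, and every triple of positive integers
arises this way (up to a common factor). -/
theorem stmt_17 (d : ℕ) (hd : 0 < d) (hdsf : Squarefree d) :
    (∀ m n : ℤ, (n ^ 2 - (d : ℤ) * m ^ 2) ^ 2 + (d : ℤ) * (2 * m * n) ^ 2
        = (n ^ 2 + (d : ℤ) * m ^ 2) ^ 2) ∧
    (∀ u v w : ℤ, 0 < u → 0 < v → 0 < w → u ^ 2 + (d : ℤ) * v ^ 2 = w ^ 2 →
      ∃ m n : ℤ, 0 < m ∧ 0 < n ∧ (d : ℤ) * m ^ 2 < n ^ 2 ∧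
        u * (n ^ 2 + (d : ℤ) * m ^ 2) = w * (n ^ 2 - (d : ℤ) * m ^ 2) ∧
        v * (n ^ 2 + (d : ℤ) * m ^ 2) = w * (2 * m * n)) := by
  refine ⟨fun m n => by ring, fun u v w hu hv hw h => ?_⟩
  -- `m / n = v / (u + w)` is the slope of the line through `(-1, 0)` and `(u/w, v/w)`;
  -- then `n² + d·m² = 2w(u + w)` and `n² - d·m² = 2u(u + w)`.
  refine ⟨v, u + w, hv, by positivity, ?_, ?_, ?_⟩
  · nlinarith [mul_pos hu hu, mul_pos hu hw]
  · linear_combination (u + w) * h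
  · linear_combination v * h
end
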